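/- arXiv:1107.0444 — 2 statements merged into one kernel-verified Lean document; each statement's English description precedes it below -/
import Mathlib

section
/- Let I be an index set and for each i ∈ I let D_i be a commutative discrete valuation ring with uniformizer π_i (an irreducible element of D_i) and fraction field K_i = Frac(D_i). Let Υ be the multiplicative submonoid of the product ring ∏_{i∈I} D_i consisting of all tuples s = (s_i) such that each s_i is a power of π_i and s_i = 1 for all but finitely many i ∈ I. Let A be the subring of ∏_{i∈I} K_i consisting of all tuples f = (f_i) such that f_i lies in the image of D_i in K_i for all but finitely many i ∈ I (the restricted product, or adèle ring, of the K_i with respect to the D_i). Then the componentwise map ∏_{i∈I} D_i → A exhibits A as the localization of the ring ∏_{i∈I} D_i at the multiplicative set Υ (i.e., IsLocalization holds for Υ and A). -/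
open Filter

variable {I : Type*} (D : I → Type*) (K : I → Type*)
  [∀ i, CommRing (D i)] [∀ i, Field (K i)] [∀ i, Algebra (D i) (K i)]

/-- The restricted product (adèle ring) of the fields `K i` with respect to the
subrings `D i`: tuples `(f i)` with `f i` in the image of `D i` for almost all `i`. -/
def adeleSubring : Subring (∀ i, K i) where
  carrier := {f | ∀ᶠ i in cofinite, f i ∈ (algebraMap (D i) (K i)).range}
  mul_mem' := by
    intro a b ha hb
    have ha' : ∀ᶠ i in cofinite, a i ∈ (algebraMap (D i) (K i)).range := ha
    have hb' : ∀ᶠ i in cofinite, b i ∈ (algebraMap (D i) (K i)).range := hb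
    exact (ha'.and hb').mono fun _ h => mul_mem h.1 h.2
  one_mem' := by
    show ∀ᶠ i in cofinite, (1 : ∀ j, K j) i ∈ (algebraMap (D i) (K i)).range
    exact Eventually.of_forall fun _ => one_mem _
  add_mem' := by
    intro a b ha hb
    have ha' : ∀ᶠ i in cofinite, a i ∈ (algebraMap (D i) (K i)).range := ha
    have hb' : ∀ᶠ i in cofinite, b i ∈ (algebraMap (D i) (K i)).range := hb
    exact (ha'.and hb').mono fun _ h => add_mem h.1 h.2
  zero_mem' := by
    show ∀ᶠ i in cofinite, (0 : ∀ j, K j) i ∈ (algebraMap (D i) (K i)).range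
    exact Eventually.of_forall fun _ => zero_mem _
  neg_mem' := by
    intro a ha
    have ha' : ∀ᶠ i in cofinite, a i ∈ (algebraMap (D i) (K i)).range := ha
    exact ha'.mono fun _ h => neg_mem h

theorem mem_adeleSubring {f : ∀ i, K i} :
    f ∈ adeleSubring D K ↔ ∀ᶠ i in cofinite, f i ∈ (algebraMap (D i) (K i)).range :=
  Iff.rfl

/-- The componentwise ring homomorphism `∏ i, D i → 𝔸` into the adèle ring. -/
def toAdeles : (∀ i, D i) →+* adeleSubring D K :=
  RingHom.codRestrict
    (Pi.ringHom fun i => (algebraMap (D i) (K i)).comp (Pi.evalRingHom D i))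
    (adeleSubring D K)
    (fun d => (mem_adeleSubring D K).mpr (Eventually.of_forall fun i => ⟨d i, rfl⟩))

/-- The multiplicative set of tuples `(s i)` in `∏ i, D i` in which every component is a power
of the uniformizer `π i` and almost all components are `1`. -/
def uniformizerSubmonoid (π : ∀ i, D i) : Submonoid (∀ i, D i) where
  carrier := {s | (∀ i, ∃ n : ℕ, s i = π i ^ n) ∧ ∀ᶠ i in cofinite, s i = 1}
  mul_mem' := by
    intro a b ha hb
    have ha' : (∀ i, ∃ n : ℕ, a i = π i ^ n) ∧ ∀ᶠ i in cofinite, a i = 1 := ha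
    have hb' : (∀ i, ∃ n : ℕ, b i = π i ^ n) ∧ ∀ᶠ i in cofinite, b i = 1 := hb
    refine ⟨fun i => ?_, (ha'.2.and hb'.2).mono fun i h => by
      simp [Pi.mul_apply, h.1, h.2]⟩
    obtain ⟨n, hn⟩ := ha'.1 i
    obtain ⟨nn, hnn⟩ := hb'.1 i
    exact ⟨n + nn, by simp [Pi.mul_apply, hn, hnn, pow_add]⟩
  one_mem' := ⟨fun i => ⟨0, by simp⟩, Eventually.of_forall fun _ => rfl⟩

/-!
Every nonzero element of a discrete valuation ring divides a power of the uniformizer, so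
`K i = D i[1/π i]`. An adèle is integral outside a finite set of indices, and at each remaining
index a power of `π i` clears its denominator. Taking the exponent `0` at every integral index
turns these local denominators into one element of the multiplicative set.
-/

theorem isLocalizationAway_of_irreducible {R F : Type*} [CommRing R] [IsDomain R]
    [IsDiscreteValuationRing R] [CommRing F] [Algebra R F] [IsFractionRing R F]
    {ϖ : R} (hϖ : Irreducible ϖ) : IsLocalization.Away ϖ F := by
  have powers_le : Submonoid.powers ϖ ≤ nonZeroDivisors R :=
    powers_le_nonZeroDivisors_of_noZeroDivisors hϖ.ne_zero
  refine (IsLocalization.iff_of_le_of_exists_dvd _ _ powers_le fun b hb => ?_).mpr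
    (inferInstance : IsFractionRing R F)
  obtain ⟨n, hn⟩ :=
    IsDiscreteValuationRing.associated_pow_irreducible (nonZeroDivisors.ne_zero hb) hϖ
  exact ⟨ϖ ^ n, ⟨n, rfl⟩, hn.dvd⟩

section Adeles

variable {D K}

theorem toAdeles_injective [∀ i, FaithfulSMul (D i) (K i)] :
    Function.Injective (toAdeles D K) := fun _ _ hxy =>
  funext fun i => FaithfulSMul.algebraMap_injective (D i) (K i)
    (congrFun (congrArg Subtype.val hxy) i)

theorem isUnit_toAdeles {s : ∀ i, D i} (hs : ∀ i, IsUnit (algebraMap (D i) (K i) (s i)))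
    (hs' : ∀ᶠ i in cofinite, IsUnit (s i)) : IsUnit (toAdeles D K s) := by
  have inv_mem : (fun i => (algebraMap (D i) (K i) (s i))⁻¹) ∈ adeleSubring D K := by
    refine hs'.mono fun i hi => ?_
    obtain ⟨t, ht⟩ := hi.exists_right_inv
    exact ⟨t, eq_inv_of_mul_eq_one_right (by rw [← map_mul, ht, map_one])⟩
  exact IsUnit.of_mul_eq_one ⟨_, inv_mem⟩
    (Subtype.ext (funext fun i => mul_inv_cancel₀ (hs i).ne_zero))

theorem isUnit_toAdeles_of_mem_uniformizerSubmonoid {π : ∀ i, D i}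
    (hπ : ∀ i, IsUnit (algebraMap (D i) (K i) (π i))) {s : ∀ i, D i}
    (hs : s ∈ uniformizerSubmonoid D π) : IsUnit (toAdeles D K s) := by
  obtain ⟨hpow, hone⟩ := hs
  refine isUnit_toAdeles (fun i => ?_) (hone.mono fun i hi => hi ▸ isUnit_one)
  obtain ⟨n, hn⟩ := hpow i
  rw [hn, map_pow]
  exact (hπ i).pow n

theorem exists_mul_toAdeles_eq_toAdeles (π : ∀ i, D i) [∀ i, IsLocalization.Away (π i) (K i)]
    (f : adeleSubring D K) :
    ∃ s ∈ uniformizerSubmonoid D π, ∃ d, f * toAdeles D K s = toAdeles D K d := by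
  have exists_local_denominator : ∀ i, ∃ (n : ℕ) (a : D i),
      f.1 i * algebraMap (D i) (K i) (π i ^ n) = algebraMap (D i) (K i) a ∧
        (f.1 i ∈ (algebraMap (D i) (K i)).range → n = 0) := by
    intro i
    by_cases hi : f.1 i ∈ (algebraMap (D i) (K i)).range
    · obtain ⟨a, ha⟩ := hi
      exact ⟨0, a, by rw [pow_zero, map_one, mul_one, ha], fun _ => rfl⟩
    · obtain ⟨n, a, ha⟩ := IsLocalization.Away.surj (π i) (f.1 i)
      exact ⟨n, a, by rw [map_pow, ha], fun h => absurd h hi⟩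
  choose n d hd hzero using exists_local_denominator
  have almost_one : ∀ᶠ i in cofinite, π i ^ n i = 1 :=
    ((mem_adeleSubring D K).mp f.2).mono fun i hi => by rw [hzero i hi, pow_zero]
  exact ⟨fun i => π i ^ n i, ⟨fun i => ⟨n i, rfl⟩, almost_one⟩, d, Subtype.ext (funext hd)⟩

end Adeles

theorem stmt_1_general [∀ i, FaithfulSMul (D i) (K i)]
    (π : ∀ i, D i) [∀ i, IsLocalization.Away (π i) (K i)] :
    @IsLocalization (∀ i, D i) _ (uniformizerSubmonoid D π) (adeleSubring D K) _
      (toAdeles D K).toAlgebra := by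
  let := (toAdeles D K).toAlgebra
  refine (isLocalization_iff _ _).mpr ⟨fun s => ?units, fun f => ?surj, fun {x y} hxy => ?eq⟩
  case units =>
    exact isUnit_toAdeles_of_mem_uniformizerSubmonoid
      (fun i => IsLocalization.Away.algebraMap_isUnit (π i)) s.2
  case surj =>
    obtain ⟨s, hs, d, hd⟩ := exists_mul_toAdeles_eq_toAdeles π f
    exact ⟨(d, ⟨s, hs⟩), hd⟩
  case eq => exact ⟨1, congrArg _ (toAdeles_injective hxy)⟩

/-- For a family of commutative discrete valuation rings `D i` with
uniformizers `π i` and fraction fields `K i`, the adèle ring (restricted product of the `K i`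
with respect to the `D i`) is the localization of the product ring `∏ i, D i` at the
multiplicative set of tuples that are componentwise powers of the uniformizers and are
almost everywhere `1`. -/
theorem stmt_1 [∀ i, IsDomain (D i)] [∀ i, IsDiscreteValuationRing (D i)]
    [∀ i, IsFractionRing (D i) (K i)]
    (π : ∀ i, D i) (hπ : ∀ i, Irreducible (π i)) :
    @IsLocalization (∀ i, D i) _ (uniformizerSubmonoid D π) (adeleSubring D K) _
      (toAdeles D K).toAlgebra := by
  have := fun i => isLocalizationAway_of_irreducible (F := K i) (hπ i)
  exact stmt_1_general D K π
end

section
/- Let k be a field, m ≥ 1 an integer, and let Γ(m) be the subring of the m×m matrix ring M_m(k[[x]]) over the formal power series ring k[[x]] consisting of all matrices whose entries strictly below the diagonal lie in the maximal ideal (x) of k[[x]] (i.e. have zero constant term). Then the canonical inclusion Γ(m) ↪ M_m(k[[x]]) is an epimorphism in the category of rings; that is, any two ring homomorphisms from M_m(k[[x]]) to a ring T that agree on Γ(m) are equal. -/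
/-- The subring `Γ(m)` of `M_m(k[[x]])` consisting of the matrices whose entries strictly
below the diagonal lie in the maximal ideal `(x)` of `k[[x]]`, i.e. have zero constant
coefficient. -/
noncomputable def Gamma (k : Type*) [Field k] (m : ℕ) :
    Subring (Matrix (Fin m) (Fin m) (PowerSeries k)) where
  carrier := {A | ∀ i j : Fin m, j < i → PowerSeries.constantCoeff (R := k) (A i j) = 0}
  mul_mem' := by
    intro A B hA hB
    have hA' : ∀ i j : Fin m, j < i → PowerSeries.constantCoeff (R := k) (A i j) = 0 := hA
    have hB' : ∀ i j : Fin m, j < i → PowerSeries.constantCoeff (R := k) (B i j) = 0 := hB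
    intro i j hji
    show PowerSeries.constantCoeff (R := k) ((A * B) i j) = 0
    rw [Matrix.mul_apply, map_sum]
    refine Finset.sum_eq_zero fun l _ => ?_
    rw [map_mul]
    rcases le_or_gt l j with h | h
    · rw [hA' i l (h.trans_lt hji), zero_mul]
    · rw [hB' l j h, mul_zero]
  one_mem' := by
    intro i j hji
    show PowerSeries.constantCoeff (R := k) ((1 : Matrix (Fin m) (Fin m) (PowerSeries k)) i j) = 0
    rw [Matrix.one_apply_ne hji.ne', map_zero]
  add_mem' := by
    intro A B hA hB
    have hA' : ∀ i j : Fin m, j < i → PowerSeries.constantCoeff (R := k) (A i j) = 0 := hA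
    have hB' : ∀ i j : Fin m, j < i → PowerSeries.constantCoeff (R := k) (B i j) = 0 := hB
    intro i j hji
    show PowerSeries.constantCoeff (R := k) ((A + B) i j) = 0
    rw [Matrix.add_apply, map_add, hA' i j hji, hB' i j hji, add_zero]
  zero_mem' := by
    intro i j hji
    show PowerSeries.constantCoeff (R := k) ((0 : Matrix (Fin m) (Fin m) (PowerSeries k)) i j) = 0
    rw [Matrix.zero_apply, map_zero]
  neg_mem' := by
    intro A hA
    have hA' : ∀ i j : Fin m, j < i → PowerSeries.constantCoeff (R := k) (A i j) = 0 := hA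
    intro i j hji
    show PowerSeries.constantCoeff (R := k) ((-A) i j) = 0
    rw [Matrix.neg_apply, map_neg, hA' i j hji, neg_zero]

/-!
Since `M_m(k[[x]])` is additively generated by the matrices `single i j a`, which lie in `Γ(m)`
when `i ≤ j`, only `single j i a` with `i ≤ j` needs an argument. Write it as `u * v * w` with
`u = single j i a`, `v = single i j 1` and `w = single j i 1`. The middle factor `v` and the
products `u * v` and `v * w` all lie in `Γ(m)`, and by Isbell's zigzag argument their images
under a homomorphism already determine the image of `u * v * w`.
-/

theorem map_mul_mul_eq_of_zigzag {M N F : Type*} [Semigroup M] [Semigroup N] [FunLike F M N]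
    [MulHomClass F M N] {g h : F} {x y z : M} (hy : g y = h y) (hxy : g (x * y) = h (x * y))
    (hyz : g (y * z) = h (y * z)) : g (x * y * z) = h (x * y * z) :=
  calc
    g (x * y * z) = g x * g (y * z) := by rw [mul_assoc, map_mul]
    _ = g x * (g y * h z) := by rw [hyz, map_mul, hy]
    _ = g (x * y) * h z := by rw [map_mul, mul_assoc]
    _ = h (x * y * z) := by rw [hxy, ← map_mul]

section Matrix

open Matrix

variable {n R T F : Type*} [Fintype n] [Semiring R] [FunLike F (Matrix n n R) T] {g h : F}

theorem map_single_eq_of_map_single_swap_eq [DecidableEq n] [Semigroup T]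
    [MulHomClass F (Matrix n n R) T] {i j : n} {a : R}
    (hii : g (single i i a) = h (single i i a)) (hjj : g (single j j 1) = h (single j j 1))
    (hji : g (single j i 1) = h (single j i 1)) : g (single i j a) = h (single i j a) := by
  have map_product_eq : g (single i j a * single j i 1 * single i j 1) =
      h (single i j a * single j i 1 * single i j 1) :=
    map_mul_mul_eq_of_zigzag hji
      (by simpa only [single_mul_single_same, mul_one] using hii)
      (by simpa only [single_mul_single_same, mul_one] using hjj)
  simpa only [single_mul_single_same, mul_one] using map_product_eq

theorem stmt_6_general {α : Type*} [LinearOrder α] {b : n → α} [NonUnitalSemiring T]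
    [NonUnitalRingHomClass F (Matrix n n R) T]
    (hgh : ∀ A : Matrix n n R, A.BlockTriangular b → g A = h A) : g = h := by
  classical
  have map_single_of_le {i j : n} (hij : b i ≤ b j) (a : R) :
      g (single i j a) = h (single i j a) :=
    hgh _ (blockTriangular_single hij a)
  have map_single (i j : n) (a : R) : g (single i j a) = h (single i j a) := by
    rcases le_total (b i) (b j) with hij | hji
    · exact map_single_of_le hij a
    · exact map_single_eq_of_map_single_swap_eq (map_single_of_le le_rfl a)
        (map_single_of_le le_rfl 1) (map_single_of_le hji 1)
  have coe_eq : (g : Matrix n n R →+ T) = h :=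
    ext_addMonoidHom fun i j => AddMonoidHom.ext (map_single i j)
  exact DFunLike.ext _ _ fun A => DFunLike.congr_fun coe_eq A

end Matrix

theorem mem_Gamma_of_blockTriangular {k : Type*} [Field k] {m : ℕ}
    {A : Matrix (Fin m) (Fin m) (PowerSeries k)} (hA : A.BlockTriangular id) :
    A ∈ Gamma k m := fun _ _ hji => by rw [hA hji, map_zero]

/-- For a field `k` and `m ≥ 1`, the canonical inclusion
`Γ(m) ↪ M_m(k[[x]])` is an epimorphism in the category of rings: any two ring homomorphisms
out of `M_m(k[[x]])` that agree on `Γ(m)` are equal. -/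
theorem stmt_6 (k : Type*) [Field k] (m : ℕ) (hm : 1 ≤ m)
    (T : Type*) [Ring T]
    (g h : Matrix (Fin m) (Fin m) (PowerSeries k) →+* T)
    (hgh : ∀ A ∈ Gamma k m, g A = h A) :
    g = h :=
  stmt_6_general fun A hA => hgh A (mem_Gamma_of_blockTriangular hA)
end
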